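/- arXiv:1804.10118 — 2 statements merged into one kernel-verified Lean document; each statement's English description precedes it below -/
import Mathlib

section
/- Let (Ω, 𝒜, μ) be a probability space, m ⊆ 𝒜 a sub-σ-algebra, ε : Ω → ℝ a random variable with standard normal law N(0,1) independent of m, and T : Ω → ℝ an m-measurable random variable. Define G* := 1{T + ε ≥ 0}, and let G : Ω → ℝ take values in {0,1} almost surely with E[G | m ⊔ σ(ε)] = r0 + (1 − r0 − r1)·G* almost surely, where r0, r1 ≥ 0 and r0 + r1 < 1. Then E[G | m] = r0 + (1 − r0 − r1)·Φ(T) almost surely. -/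
open MeasureTheory ProbabilityTheory

/-- The standard normal density `φ(x) = (2π)^{−1/2}·exp(−x²/2)`. -/
noncomputable def stdNormalPdf (x : ℝ) : ℝ :=
  (Real.sqrt (2 * Real.pi))⁻¹ * Real.exp (-x ^ 2 / 2)

/-- The standard normal cdf `Φ(t) = ∫_{−∞}^t φ(x) dx`. -/
noncomputable def stdNormalCdf (t : ℝ) : ℝ := ∫ x in Set.Iic t, stdNormalPdf x

/-!
Conditioning first on `m ⊔ σ(ε)` and then on `m` reduces the claim to `E[G* | m]`. For `s ∈ m`,
the joint law of `(T, ε)` under `μ` restricted to `s` is still a product with second factor the law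
of `ε`; Fubini on each such `s` shows that `E[G* | m]` is obtained by integrating `ε` out with `T`
held fixed, which gives `P(ε ≥ -t)` at `t = T`. For a centred Gaussian shock, symmetry turns this
into the cdf at `T`.
-/

section IndependentFreezing

variable {Ω α β E : Type*} {m 𝒜 : MeasurableSpace Ω} [MeasurableSpace α] [MeasurableSpace β]
  [NormedAddCommGroup E] {μ : Measure Ω} [IsFiniteMeasure μ]
  {X : Ω → α} {Y : Ω → β} {f : α × β → E} {s : Set Ω}

lemma map_restrict_prodMk_eq_prod_of_indep (hm : m ≤ 𝒜) (hX : Measurable[m] X)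
    (hY : Measurable[𝒜] Y) (hYm : Indep (MeasurableSpace.comap Y inferInstance) m μ)
    (hs : MeasurableSet[m] s) :
    (μ.restrict s).map (fun ω => (X ω, Y ω)) = ((μ.restrict s).map X).prod (μ.map Y) := by
  have hX' : Measurable[𝒜] X := hX.mono hm le_rfl
  refine (Measure.prod_eq fun a b ha hb => ?_).symm
  have h_indep : μ (X ⁻¹' a ∩ s ∩ Y ⁻¹' b) = μ (X ⁻¹' a ∩ s) * μ (Y ⁻¹' b) :=
    (Indep_iff m _ μ).1 hYm.symm _ _ ((hX ha).inter hs) ⟨b, hb, rfl⟩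
  rw [Measure.map_apply (hX'.prodMk hY) (ha.prod hb), Measure.map_apply hX' ha,
    Measure.map_apply hY hb, Measure.restrict_apply' (hm s hs), Measure.restrict_apply' (hm s hs),
    ← h_indep, Set.mk_preimage_prod, Set.inter_right_comm]

lemma integrable_prod_map_restrict_of_indep (hm : m ≤ 𝒜) (hX : Measurable[m] X)
    (hY : Measurable[𝒜] Y) (hYm : Indep (MeasurableSpace.comap Y inferInstance) m μ)
    (hf : StronglyMeasurable f) (hf_int : Integrable (fun ω => f (X ω, Y ω)) μ)
    (hs : MeasurableSet[m] s) :
    Integrable f (((μ.restrict s).map X).prod (μ.map Y)) := by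
  have hXY : Measurable[𝒜] fun ω => (X ω, Y ω) := (hX.mono hm le_rfl).prodMk hY
  rw [← map_restrict_prodMk_eq_prod_of_indep hm hX hY hYm hs,
    integrable_map_measure hf.aestronglyMeasurable hXY.aemeasurable]
  exact hf_int.restrict

variable [NormedSpace ℝ E]

lemma setIntegral_integral_map_eq_of_indep (hm : m ≤ 𝒜) (hX : Measurable[m] X)
    (hY : Measurable[𝒜] Y) (hYm : Indep (MeasurableSpace.comap Y inferInstance) m μ)
    (hf : StronglyMeasurable f) (hf_int : Integrable (fun ω => f (X ω, Y ω)) μ)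
    (hs : MeasurableSet[m] s) :
    ∫ ω in s, ∫ y, f (X ω, y) ∂μ.map Y ∂μ = ∫ ω in s, f (X ω, Y ω) ∂μ := by
  have hX' : Measurable[𝒜] X := hX.mono hm le_rfl
  calc ∫ ω in s, ∫ y, f (X ω, y) ∂μ.map Y ∂μ
      = ∫ x, ∫ y, f (x, y) ∂μ.map Y ∂(μ.restrict s).map X :=
        (integral_map hX'.aemeasurable hf.integral_prod_right'.aestronglyMeasurable).symm
    _ = ∫ p, f p ∂((μ.restrict s).map X).prod (μ.map Y) :=
        (integral_prod f
          (integrable_prod_map_restrict_of_indep hm hX hY hYm hf hf_int hs)).symm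
    _ = ∫ p, f p ∂(μ.restrict s).map (fun ω => (X ω, Y ω)) := by
        rw [map_restrict_prodMk_eq_prod_of_indep hm hX hY hYm hs]
    _ = ∫ ω in s, f (X ω, Y ω) ∂μ :=
        integral_map (hX'.prodMk hY).aemeasurable hf.aestronglyMeasurable

theorem condExp_prodMk_ae_eq_integral_map_of_indep [CompleteSpace E] (hm : m ≤ 𝒜)
    (hX : Measurable[m] X) (hY : Measurable[𝒜] Y)
    (hYm : Indep (MeasurableSpace.comap Y inferInstance) m μ)
    (hf : StronglyMeasurable f) (hf_int : Integrable (fun ω => f (X ω, Y ω)) μ) :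
    μ[fun ω => f (X ω, Y ω) | m] =ᵐ[μ] fun ω => ∫ y, f (X ω, y) ∂μ.map Y := by
  have hX' : Measurable[𝒜] X := hX.mono hm le_rfl
  refine (ae_eq_condExp_of_forall_setIntegral_eq hm hf_int (fun s hs _ => ?_)
    (fun s hs _ => setIntegral_integral_map_eq_of_indep hm hX hY hYm hf hf_int hs)
    (hf.integral_prod_right'.comp_measurable hX).aestronglyMeasurable).symm
  exact (integrable_prod_map_restrict_of_indep hm hX hY hYm hf hf_int
    hs).integral_prod_left.comp_measurable hX'

end IndependentFreezing

section ThresholdCrossing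

variable {Ω : Type*} {m 𝒜 : MeasurableSpace Ω} {μ : Measure Ω} {T ε : Ω → ℝ}

lemma integrable_ite_zero_le_add [IsFiniteMeasure μ] (hT : Measurable T) (hε : Measurable ε) :
    Integrable (fun ω => if 0 ≤ T ω + ε ω then (1 : ℝ) else 0) μ :=
  (integrable_const (1 : ℝ)).indicator (measurableSet_le measurable_const (hT.add hε))

lemma integral_ite_zero_le_add (ν : Measure ℝ) (t : ℝ) :
    ∫ x, (if 0 ≤ t + x then (1 : ℝ) else 0) ∂ν = ν.real (Set.Ici (-t)) := by
  simp_rw [← neg_le_iff_add_nonneg']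
  exact integral_indicator_one measurableSet_Ici

lemma condExp_ite_zero_le_add_ae_eq [IsFiniteMeasure μ] (hm : m ≤ 𝒜) (hT : Measurable[m] T)
    (hε : Measurable[𝒜] ε) (hεm : Indep (MeasurableSpace.comap ε inferInstance) m μ) :
    μ[fun ω => if 0 ≤ T ω + ε ω then (1 : ℝ) else 0 | m] =ᵐ[μ]
      fun ω => (μ.map ε).real (Set.Ici (-T ω)) := by
  have h_meas : StronglyMeasurable fun p : ℝ × ℝ => if 0 ≤ p.1 + p.2 then (1 : ℝ) else 0 :=
    stronglyMeasurable_one.indicator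
      (measurableSet_le measurable_const (measurable_fst.add measurable_snd))
  simpa only [integral_ite_zero_le_add] using
    condExp_prodMk_ae_eq_integral_map_of_indep hm hT hε hεm h_meas
      (integrable_ite_zero_le_add (hT.mono hm le_rfl) hε)

end ThresholdCrossing

lemma condExp_const_add_const_mul_ae_eq {Ω : Type*} {m 𝒜 : MeasurableSpace Ω} (hm : m ≤ 𝒜)
    {μ : Measure Ω} [IsFiniteMeasure μ] {f : Ω → ℝ} (hf : Integrable f μ) (a b : ℝ) :
    μ[fun ω => a + b * f ω | m] =ᵐ[μ] fun ω => a + b * μ[f | m] ω := by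
  filter_upwards [condExp_add (integrable_const a) (hf.const_mul b) m,
    condExp_smul b f m] with ω h_add h_smul
  refine h_add.trans ?_
  rw [Pi.add_apply, condExp_const hm]
  exact congrArg (a + ·) h_smul

lemma gaussianReal_real_Ici_neg (v : NNReal) (t : ℝ) :
    (gaussianReal 0 v).real (Set.Ici (-t)) = (gaussianReal 0 v).real (Set.Iic t) := by
  have h_symm : (gaussianReal 0 v).map (fun x => -x) = gaussianReal 0 v := by
    rw [gaussianReal_map_neg, neg_zero]
  calc (gaussianReal 0 v).real (Set.Ici (-t))
      = ((gaussianReal 0 v).map (fun x => -x)).real (Set.Ici (-t)) := by rw [h_symm]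
    _ = (gaussianReal 0 v).real ((fun x => -x) ⁻¹' Set.Ici (-t)) :=
        map_measureReal_apply measurable_neg measurableSet_Ici
    _ = (gaussianReal 0 v).real (Set.Iic t) := by simp

lemma stdNormalPdf_eq_gaussianPDFReal : stdNormalPdf = gaussianPDFReal 0 1 := by
  ext x
  simp [stdNormalPdf, gaussianPDFReal]

lemma stdNormalCdf_eq_gaussianReal_real_Iic (t : ℝ) :
    stdNormalCdf t = (gaussianReal 0 1).real (Set.Iic t) := by
  rw [stdNormalCdf, stdNormalPdf_eq_gaussianPDFReal, measureReal_def,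
    gaussianReal_apply_eq_integral 0 one_ne_zero,
    ENNReal.toReal_ofReal (integral_nonneg (gaussianPDFReal_nonneg 0 1))]

theorem condexp_misclassified_probit_general {Ω : Type*} {m 𝒜 : MeasurableSpace Ω} (hm : m ≤ 𝒜)
    {μ : Measure Ω} [IsFiniteMeasure μ] {ε T G : Ω → ℝ} (hε : Measurable[𝒜] ε)
    (hInd : Indep (MeasurableSpace.comap ε inferInstance) m μ) (hT : Measurable[m] T)
    {r0 r1 : ℝ}
    (hG : μ[G | m ⊔ MeasurableSpace.comap ε inferInstance] =ᵐ[μ]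
      fun ω => r0 + (1 - r0 - r1) * (if 0 ≤ T ω + ε ω then (1 : ℝ) else 0)) :
    μ[G | m] =ᵐ[μ] fun ω => r0 + (1 - r0 - r1) * (μ.map ε).real (Set.Ici (-T ω)) := by
  have h_tower : μ[μ[G | m ⊔ MeasurableSpace.comap ε inferInstance] | m] =ᵐ[μ] μ[G | m] :=
    condExp_condExp_of_le le_sup_left (sup_le hm hε.comap_le)
  have h_affine := condExp_const_add_const_mul_ae_eq hm
    (integrable_ite_zero_le_add (μ := μ) (hT.mono hm le_rfl) hε) r0 (1 - r0 - r1)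
  filter_upwards [h_tower, condExp_congr_ae (m := m) hG, h_affine,
    condExp_ite_zero_le_add_ae_eq hm hT hε hInd] with ω h_tower h_link h_affine h_threshold
  rw [← h_tower, h_link, h_affine, h_threshold]

/-- forward direction of Theorem 1: with `ε ~ N(0,1)` independent of
`m`, `T` `m`-measurable, `G* = 1{T + ε ≥ 0}`, and
`E[G | m ⊔ σ(ε)] = r0 + (1 − r0 − r1)·G*` a.s., one has
`E[G | m] = r0 + (1 − r0 − r1)·Φ(T)` a.s. -/
theorem condexp_misclassified_probit {Ω : Type*} (m : MeasurableSpace Ω)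
    {𝒜 : MeasurableSpace Ω} (hm : m ≤ 𝒜)
    (μ : Measure Ω) [IsProbabilityMeasure μ]
    (ε : Ω → ℝ) (hε : Measurable[𝒜] ε)
    (hlaw : μ.map ε = gaussianReal 0 1)
    (hInd : Indep (MeasurableSpace.comap ε inferInstance) m μ)
    (T : Ω → ℝ) (hT : Measurable[m] T)
    (r0 r1 : ℝ) (hr0 : 0 ≤ r0) (hr1 : 0 ≤ r1) (hrsum : r0 + r1 < 1)
    (G : Ω → ℝ) (hG01 : ∀ᵐ ω ∂μ, G ω = 0 ∨ G ω = 1)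
    (hG : μ[G | m ⊔ MeasurableSpace.comap ε inferInstance] =ᵐ[μ]
      fun ω => r0 + (1 - r0 - r1) * (if 0 ≤ T ω + ε ω then (1 : ℝ) else 0)) :
    μ[G | m] =ᵐ[μ] fun ω => r0 + (1 - r0 - r1) * stdNormalCdf (T ω) := by
  simpa only [hlaw, gaussianReal_real_Ici_neg, ← stdNormalCdf_eq_gaussianReal_real_Iic] using
    condexp_misclassified_probit_general hm hε hInd hT hG
end

section
/- Let n ≥ 1, let 𝒳 be a type with decidable equality, and let X : Fin n → Fin n → 𝒳, G : Fin n → Fin n → ℝ, m : Fin n → Fin n → ℝ, and q : Fin n → Fin n → Fin n → ℝ. For i, j ∈ Fin n define the vectors in ℝ⁴: V(i,j) := (G(j,i), (1/n)∑_k G(k,j), (1/n)∑_k G(k,i)·G(k,j), (1/n)∑_k (G(k,i) + G(k,j))) and M(i,j) := (m(j,i), (1/n)∑_k m(k,j), (1/n)∑_k q(k,i,j), (1/n)∑_k (m(k,i) + m(k,j))). For x ∈ 𝒳 define p̂(x) := (1/n²)∑_{i,j} 1{X(i,j) = x}, and whenever p̂(x) > 0 define γ̂(x) := [(1/n²)∑_{i,j}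 1{X(i,j) = x}·V(i,j)] / p̂(x) and, for each k ∈ Fin n, ψ(k,x) := (1/n²)∑_{i₁,j₁} (1{X(i₁,j₁) = x}/p̂(x))·(0, G(k,j₁) − m(k,j₁), G(k,i₁)·G(k,j₁) − q(k,i₁,j₁), (G(k,i₁) − m(k,i₁)) + (G(k,j₁) − m(k,j₁))) + (1/n)∑_{i₁} (1{X(i₁,k) = x}/p̂(x))·(G(k,i₁) − m(k,i₁), 0, 0, 0). Assume the symmetry condition: for all i, j, i₁, j₁ ∈ Fin n, if X(i₁,j₁) = X(i,j) then M(i₁,j₁) = M(i,j). Then for all i, j ∈ Fin n: γ̂(X(i,j)) − M(i,j) = (1/n)∑_k ψ(k, X(i,j)). -/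
open Finset

/-! The map sending a pairwise statistic to its average over the cell `{(i, j) | X i j = x}` is
linear and fixes the value of anything constant on the cell. By the symmetry condition, the
estimation error at `X i j` is therefore the cell average of the deviations `V - M`. A deviation is
a dyadic term, depending on the link `(j, i)` only, plus an average over agents `k`. Exchanging
sums attributes the second part to the agents `k`, and grouping the dyadic terms by the agent who
sends the link attributes the first part to the agents as well. -/

section CellMean

variable {ι 𝒳 K E : Type*} [Fintype ι] [DecidableEq 𝒳]

/-- The empirical frequency `p̂(x)` of the attribute `x` among all ordered pairs of agents,
as an element of the field `K`. Diagonal pairs are counted. -/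
def pairFreq (K : Type*) [Field K] (X : ι → ι → 𝒳) (x : 𝒳) : K :=
  (1 / (Fintype.card ι : K) ^ 2) * ∑ i, ∑ j, (if X i j = x then (1 : K) else 0)

theorem pairFreq_nonneg [Field K] [LinearOrder K] [IsStrictOrderedRing K]
    (X : ι → ι → 𝒳) (x : 𝒳) : 0 ≤ pairFreq K X x := by
  unfold pairFreq
  positivity

theorem pairFreq_ne_zero [Field K] [CharZero K] (X : ι → ι → 𝒳) (i j : ι) :
    pairFreq K X (X i j) ≠ 0 := by
  have : Nonempty ι := ⟨i⟩
  have hcount : ∑ a, ∑ b, (if X a b = X i j then 1 else 0) ≠ 0 := by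
    simp only [ne_eq, sum_eq_zero_iff, mem_univ, true_imp_iff, not_forall]
    exact ⟨i, j, by simp⟩
  exact mul_ne_zero (by simp) (mod_cast hcount)

variable [AddCommGroup E]

/-- The average of a pairwise statistic over the pairs with attribute `x`, as a linear map in the
statistic; applied to the observed vectors `V` it is the estimator `γ̂(x)`. It is the zero map when
`p̂(x) = 0`. -/
def cellMean (K : Type*) [Field K] [Module K E] (X : ι → ι → 𝒳) (x : 𝒳) :
    (ι → ι → E) →ₗ[K] E :=
  (1 / (Fintype.card ι : K) ^ 2) • ∑ i, ∑ j,
    ((if X i j = x then (1 : K) else 0) / pairFreq K X x) •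
      (LinearMap.proj j ∘ₗ LinearMap.proj i)

variable [Field K] [Module K E]

theorem cellMean_apply (X : ι → ι → 𝒳) (x : 𝒳) (V : ι → ι → E) :
    cellMean K X x V = (1 / (Fintype.card ι : K) ^ 2) • ∑ i, ∑ j,
      ((if X i j = x then (1 : K) else 0) / pairFreq K X x) • V i j := by
  simp [cellMean]

theorem cellMean_eq_inv_pairFreq_smul (X : ι → ι → 𝒳) (x : 𝒳) (V : ι → ι → E) :
    cellMean K X x V = (pairFreq K X x)⁻¹ •
      ((1 / (Fintype.card ι : K) ^ 2) • ∑ i, ∑ j, (if X i j = x then V i j else 0)) := by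
  rw [cellMean_apply, smul_comm (pairFreq K X x)⁻¹]
  simp only [smul_sum, smul_ite, smul_zero, ite_div, zero_div, one_div, ite_smul, zero_smul]

theorem cellMean_eq_of_forall_eq {X : ι → ι → 𝒳} {x : 𝒳} (hx : pairFreq K X x ≠ 0)
    {M : ι → ι → E} {μ : E} (hM : ∀ i j, X i j = x → M i j = μ) :
    cellMean K X x M = μ := by
  have hterm : ∀ i j, (if X i j = x then M i j else 0) = (if X i j = x then (1 : K) else 0) • μ :=
    fun i j => by split_ifs with h <;> simp [hM, h]
  simp only [cellMean_eq_inv_pairFreq_smul, hterm, ← sum_smul, smul_smul]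
  rw [← pairFreq, inv_mul_cancel₀ hx, one_smul]

/-- The influence function `ψ(k, x)` of agent `k` on the cell mean at `x`, for a statistic whose
deviation from its mean at `(i, j)` is the sum of a dyadic term `L j i` and the average over `k` of
`R k i j`. -/
def influence (K : Type*) [Field K] [Module K E] (X : ι → ι → 𝒳)
    (L : ι → ι → E) (R : ι → ι → ι → E) (k : ι) (x : 𝒳) : E :=
  cellMean K X x (R k) + (1 / (Fintype.card ι : K)) •
    ∑ i, ((if X i k = x then (1 : K) else 0) / pairFreq K X x) • L k i

theorem cellMean_swap_eq_average (X : ι → ι → 𝒳) (x : 𝒳) (L : ι → ι → E) :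
    cellMean K X x (fun i j => L j i) = (1 / (Fintype.card ι : K)) • ∑ k,
      (1 / (Fintype.card ι : K)) •
        ∑ i, ((if X i k = x then (1 : K) else 0) / pairFreq K X x) • L k i := by
  rw [cellMean_apply, sum_comm, ← smul_sum, smul_smul, ← sq, one_div_pow]

theorem cellMean_eq_average_influence (X : ι → ι → 𝒳) (x : 𝒳)
    (L : ι → ι → E) (R : ι → ι → ι → E) :
    cellMean K X x (fun i j => L j i + (1 / (Fintype.card ι : K)) • ∑ k, R k i j) =
      (1 / (Fintype.card ι : K)) • ∑ k, influence K X L R k x := by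
  have hsplit : (fun i j => L j i + (1 / (Fintype.card ι : K)) • ∑ k, R k i j) =
      (fun i j => L j i) + (1 / (Fintype.card ι : K)) • ∑ k, R k := by
    ext i j
    simp only [Pi.add_apply, Pi.smul_apply, Finset.sum_apply]
  simp only [influence, sum_add_distrib, smul_add]
  rw [hsplit, map_add, map_smul, map_sum, cellMean_swap_eq_average, add_comm]

theorem gamma_influence_decomposition_general [CharZero K] (X : ι → ι → 𝒳)
    {V M L : ι → ι → E} {R : ι → ι → ι → E}
    (hdev : ∀ i j, V i j - M i j = L j i + (1 / (Fintype.card ι : K)) • ∑ k, R k i j)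
    {i j : ι} (hsym : ∀ i₁ j₁, X i₁ j₁ = X i j → M i₁ j₁ = M i j) :
    cellMean K X (X i j) V - M i j =
      (1 / (Fintype.card ι : K)) • ∑ k, influence K X L R k (X i j) := by
  calc cellMean K X (X i j) V - M i j
      = cellMean K X (X i j) (V - M) := by
        rw [map_sub, cellMean_eq_of_forall_eq (pairFreq_ne_zero X i j) hsym]
    _ = cellMean K X (X i j)
          (fun a b => L b a + (1 / (Fintype.card ι : K)) • ∑ k, R k a b) :=
        congrArg _ (funext₂ hdev)
    _ = _ := cellMean_eq_average_influence X (X i j) L R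

end CellMean

theorem link_statistics_sub_means {ι R : Type*} [Fintype ι] [CommRing R] (c : R)
    (G m : ι → ι → R) (q : ι → ι → ι → R) (i j : ι) :
    ![G j i, c * ∑ k, G k j, c * ∑ k, G k i * G k j, c * ∑ k, (G k i + G k j)] -
        ![m j i, c * ∑ k, m k j, c * ∑ k, q k i j, c * ∑ k, (m k i + m k j)] =
      ![G j i - m j i, 0, 0, 0] + c • ∑ k, ![0, G k j - m k j, G k i * G k j - q k i j,
        (G k i - m k i) + (G k j - m k j)] := by
  ext s
  fin_cases s <;> simp [← mul_sub, ← sum_sub_distrib, add_sub_add_comm]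

/-- influence-function decomposition, Lemma A.3 of the paper:
under the symmetry condition on the conditional-mean vector `M`, the estimation
error `γ̂(X(i,j)) − M(i,j)` equals the average over agents `k` of the per-agent
influence functions `ψ(k, X(i,j))`. -/
theorem gamma_influence_decomposition (n : ℕ) (hn : 1 ≤ n)
    (𝒳 : Type*) [DecidableEq 𝒳]
    (X : Fin n → Fin n → 𝒳) (G m : Fin n → Fin n → ℝ)
    (q : Fin n → Fin n → Fin n → ℝ)
    (V M : Fin n → Fin n → Fin 4 → ℝ)
    (hV : ∀ i j, V i j =
      ![G j i,
        (1 / (n : ℝ)) * ∑ k, G k j,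
        (1 / (n : ℝ)) * ∑ k, G k i * G k j,
        (1 / (n : ℝ)) * ∑ k, (G k i + G k j)])
    (hM : ∀ i j, M i j =
      ![m j i,
        (1 / (n : ℝ)) * ∑ k, m k j,
        (1 / (n : ℝ)) * ∑ k, q k i j,
        (1 / (n : ℝ)) * ∑ k, (m k i + m k j)])
    (phat : 𝒳 → ℝ)
    (hphat : ∀ x, phat x =
      (1 / (n : ℝ) ^ 2) * ∑ i, ∑ j, (if X i j = x then (1 : ℝ) else 0))
    (γhat : 𝒳 → Fin 4 → ℝ)
    (hγhat : ∀ x, 0 < phat x →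
      γhat x = (phat x)⁻¹ •
        ((1 / (n : ℝ) ^ 2) • ∑ i, ∑ j, (if X i j = x then V i j else 0)))
    (ψ : Fin n → 𝒳 → Fin 4 → ℝ)
    (hψ : ∀ k x, 0 < phat x →
      ψ k x =
        (1 / (n : ℝ) ^ 2) • (∑ i₁, ∑ j₁,
          ((if X i₁ j₁ = x then (1 : ℝ) else 0) / phat x) •
            (![0,
               G k j₁ - m k j₁,
               G k i₁ * G k j₁ - q k i₁ j₁,
               (G k i₁ - m k i₁) + (G k j₁ - m k j₁)] : Fin 4 → ℝ))
        + (1 / (n : ℝ)) • (∑ i₁,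
          ((if X i₁ k = x then (1 : ℝ) else 0) / phat x) •
            (![G k i₁ - m k i₁, 0, 0, 0] : Fin 4 → ℝ)))
    (hsym : ∀ i j i₁ j₁, X i₁ j₁ = X i j → M i₁ j₁ = M i j) :
    ∀ i j, γhat (X i j) - M i j = (1 / (n : ℝ)) • ∑ k, ψ k (X i j) := by
  intro i j
  have hphat_eq : ∀ x, phat x = pairFreq ℝ X x := fun x => by
    rw [hphat, pairFreq, Fintype.card_fin]
  have hpos : 0 < phat (X i j) :=
    hphat_eq (X i j) ▸ (pairFreq_nonneg X _).lt_of_ne' (pairFreq_ne_zero X i j)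
  have hγ : γhat (X i j) = cellMean ℝ X (X i j) V := by
    rw [hγhat _ hpos, hphat_eq, cellMean_eq_inv_pairFreq_smul, Fintype.card_fin]
  have hψ_eq : ∀ k, ψ k (X i j) = influence ℝ X (fun k a => ![G k a - m k a, 0, 0, 0])
      (fun k a b => ![0, G k b - m k b, G k a * G k b - q k a b,
        (G k a - m k a) + (G k b - m k b)]) k (X i j) := fun k => by
    rw [hψ k _ hpos, hphat_eq, influence, cellMean_apply, Fintype.card_fin]
  simp only [hγ, hψ_eq]
  simpa only [Fintype.card_fin] using gamma_influence_decomposition_general (K := ℝ) X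
    (fun a b => by rw [hV, hM, Fintype.card_fin, link_statistics_sub_means]) (hsym i j)
end
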